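/- (Mazur's theorem for spaces of sets.) Let E be a real Banach space and let 𝒵 ⊆ ℭ_c(E) be nonempty and compact in the Pompeiu–Hausdorff metric h. Define co 𝒵 = { Y ∈ ℭ_c(E) : Y = closure of λ₁X₁ + … + λ_nX_n for some n ∈ ℕ, X_i ∈ 𝒵, λ_i ∈ [0,1] with λ₁+…+λ_n = 1 }. Then the closure of co 𝒵 in the metric space (ℭ_c(E), h) is compact, and it is convex in the sense that if Y₁, Y₂ belong to it and λ ∈ [0,1], then the closure of (1−λ)Y₁ + λY₂ belongs to it. -/

import Mathlib

open Metric Filter Topology Pointwise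

variable {E : Type*} [NormedAddCommGroup E] [NormedSpace ℝ E] [CompleteSpace E]

/-- The excess `e(A,B) = sup_{a ∈ A} d(a, B)`. -/
noncomputable def excess (A B : Set E) : ℝ := sSup ((fun a => infDist a B) '' A)

/-- The Pompeiu–Hausdorff distance `h(A,B) = max (e(A,B)) (e(B,A))`. -/
noncomputable def hdist (A B : Set E) : ℝ := max (excess A B) (excess B A)

/-- Membership in `ℭ_c(E)`: nonempty, closed, bounded and convex. -/
def IsCBC (A : Set E) : Prop :=
  A.Nonempty ∧ IsClosed A ∧ Bornology.IsBounded A ∧ Convex ℝ A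

/-- A family of sets is compact in the Pompeiu–Hausdorff metric iff it is sequentially
compact: every sequence in the family has a subsequence converging in `h` to a member. -/
def HCompact (𝒵 : Set (Set E)) : Prop :=
  ∀ Z : ℕ → Set E, (∀ n, Z n ∈ 𝒵) →
    ∃ W ∈ 𝒵, ∃ φ : ℕ → ℕ, StrictMono φ ∧
      Tendsto (fun k => hdist (Z (φ k)) W) atTop (𝓝 0)

/-- The family `co 𝒵` of closures of finite convex combinations of members of `𝒵`. -/
def coFam (𝒵 : Set (Set E)) : Set (Set E) :=
  {Y | ∃ (n : ℕ) (X : Fin n → Set E) (lam : Fin n → ℝ),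
    (∀ i, X i ∈ 𝒵) ∧ (∀ i, lam i ∈ Set.Icc (0 : ℝ) 1) ∧ (∑ i, lam i) = 1 ∧
    Y = closure (∑ i, lam i • X i)}

/-- The closure of a family of sets inside `(ℭ_c(E), h)`: members of `ℭ_c(E)` that are
`h`-limits of sequences from the family. -/
def HClosureIn (𝒮 : Set (Set E)) : Set (Set E) :=
  {Y | IsCBC Y ∧ ∃ Z : ℕ → Set E, (∀ n, Z n ∈ 𝒮) ∧
    Tendsto (fun n => hdist (Z n) Y) atTop (𝓝 0)}

/-!
Finite nets pass from `𝒵` to `co 𝒵`. Averaging sets with fixed weights is 1-Lipschitz for the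
Hausdorff distance, so replacing each `Xᵢ` by a nearest member of a finite `ε`-net moves
`∑ λᵢ Xᵢ` by at most `ε`. Convexity gives `λ A + μ A = (λ + μ) A`, so afterwards the summands
can be grouped and the combination depends only on a point of a fixed finite-dimensional simplex,
on which it is continuous. Hence `co 𝒵` is totally bounded, and its closure is compact because
`ℭ_c(E)` is complete, being closed in the complete space of closed subsets of `E`.
-/

section HausdorffDistance

open TopologicalSpace

theorem totallyBounded_of_forall_exists_edist_lt {α : Type*} [PseudoEMetricSpace α] {s : Set α}
    (h : ∀ ε > 0, ∃ t, TotallyBounded t ∧ ∀ x ∈ s, ∃ y ∈ t, edist x y < ε) :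
    TotallyBounded s := by
  refine EMetric.totallyBounded_iff.2 fun ε hε => ?_
  have hε2 : 0 < ε / 2 := ENNReal.half_pos hε.ne'
  obtain ⟨t, ht, hst⟩ := h (ε / 2) hε2
  obtain ⟨u, hu, htu⟩ := EMetric.totallyBounded_iff.1 ht (ε / 2) hε2
  refine ⟨u, hu, fun x hx => ?_⟩
  obtain ⟨y, hy, hxy⟩ := hst x hx
  obtain ⟨z, hz, hyz⟩ := Set.mem_iUnion₂.1 (htu hy)
  refine Set.mem_iUnion₂.2 ⟨z, hz, ?_⟩
  calc edist x z ≤ edist x y + edist y z := edist_triangle _ _ _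
    _ < ε / 2 + ε / 2 := ENNReal.add_lt_add hxy hyz
    _ = ε := ENNReal.add_halves ε

theorem hausdorffEDist_singleton_ne_top_iff {α : Type*} [PseudoMetricSpace α] {s : Set α} {x : α} :
    hausdorffEDist s {x} ≠ ⊤ ↔ s.Nonempty ∧ Bornology.IsBounded s := by
  refine ⟨fun h => ⟨?_, ?_⟩, fun h => hausdorffEDist_ne_top_of_nonempty_of_bounded h.1
    (Set.singleton_nonempty x) h.2 Bornology.isBounded_singleton⟩
  · rw [hausdorffEDist_comm] at h
    exact nonempty_of_hausdorffEDist_ne_top (Set.singleton_nonempty x) h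
  · refine (isBounded_closedBall (x := x) (r := hausdorffDist s {x})).subset fun y hy => ?_
    simpa only [mem_closedBall, infDist_singleton] using infDist_le_hausdorffDist_of_mem hy h

theorem isClosed_setOfPred_nonempty_isBounded {α : Type*} [MetricSpace α] :
    IsClosed {C : Closeds α | (C : Set α).Nonempty ∧ Bornology.IsBounded (C : Set α)} := by
  rcases isEmpty_or_nonempty α with _ | ⟨⟨x⟩⟩
  · simp only [Set.eq_empty_of_isEmpty, Set.not_nonempty_empty, false_and, Set.ofPred_false,
      isClosed_empty]
  · convert isClosed_eball_top (x := ({x} : Closeds α)) using 1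
    ext C
    rw [mem_eball, lt_top_iff_ne_top]
    exact hausdorffEDist_singleton_ne_top_iff.symm

end HausdorffDistance

section MinkowskiSum

variable {F : Type*} [SeminormedAddCommGroup F] {ι : Type*}

theorem infEDist_add_le (x y : F) (A B : Set F) :
    infEDist (x + y) (A + B) ≤ infEDist x A + infEDist y B :=
  ENNReal.le_iInf₂_add_iInf₂ fun a ha b hb =>
    (infEDist_le_edist_of_mem (Set.add_mem_add ha hb)).trans (edist_add_add_le x y a b)

theorem hausdorffEDist_add_le (A B C D : Set F) :
    hausdorffEDist (A + B) (C + D) ≤ hausdorffEDist A C + hausdorffEDist B D := by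
  refine hausdorffEDist_le_of_infEDist ?_ ?_
  · rintro _ ⟨a, ha, b, hb, rfl⟩
    exact (infEDist_add_le a b C D).trans <|
      add_le_add (infEDist_le_hausdorffEDist_of_mem ha) (infEDist_le_hausdorffEDist_of_mem hb)
  · rintro _ ⟨c, hc, d, hd, rfl⟩
    rw [hausdorffEDist_comm (s := A), hausdorffEDist_comm (s := B)]
    exact (infEDist_add_le c d A B).trans <|
      add_le_add (infEDist_le_hausdorffEDist_of_mem hc) (infEDist_le_hausdorffEDist_of_mem hd)

theorem hausdorffEDist_sum_le (s : Finset ι) (A B : ι → Set F) :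
    hausdorffEDist (∑ i ∈ s, A i) (∑ i ∈ s, B i) ≤ ∑ i ∈ s, hausdorffEDist (A i) (B i) := by
  classical
  induction s using Finset.induction_on with
  | empty => simp only [Finset.sum_empty, hausdorffEDist_self, le_refl]
  | insert i s hi ih =>
    simp only [Finset.sum_insert hi]
    exact (hausdorffEDist_add_le _ _ _ _).trans (add_le_add_right ih _)

theorem closure_sum_closure (s : Finset ι) (A : ι → Set F) :
    closure (∑ i ∈ s, closure (A i)) = closure (∑ i ∈ s, A i) := by
  rw [← hausdorffEDist_zero_iff_closure_eq_closure, ← nonpos_iff_eq_zero]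
  refine (hausdorffEDist_sum_le s _ A).trans_eq ?_
  simp only [hausdorffEDist_closure_left, hausdorffEDist_self, Finset.sum_const_zero]

variable [NormedSpace ℝ F]

theorem hausdorffEDist_smul_le (c : ℝ) {A B : Set F} (h : hausdorffEDist A B ≠ ⊤) :
    hausdorffEDist (c • A) (c • B) ≤ ‖c‖ₑ * hausdorffEDist A B := by
  rcases eq_or_ne c 0 with rfl | hc
  · rcases empty_or_nonempty_of_hausdorffEDist_ne_top h with ⟨rfl, rfl⟩ | ⟨hA, hB⟩
    · simp only [Set.smul_set_empty, hausdorffEDist_self, zero_le]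
    · simp only [Set.zero_smul_set hA, Set.zero_smul_set hB, hausdorffEDist_self, zero_le]
  · refine hausdorffEDist_le_of_infEDist ?_ ?_
    · rintro _ ⟨a, ha, rfl⟩
      rw [infEDist_smul₀ hc]
      exact mul_le_mul_right (infEDist_le_hausdorffEDist_of_mem ha) _
    · rintro _ ⟨b, hb, rfl⟩
      rw [infEDist_smul₀ hc, hausdorffEDist_comm]
      exact mul_le_mul_right (infEDist_le_hausdorffEDist_of_mem hb) _

theorem hausdorffEDist_smul_smul_le (c d : ℝ) {A : Set F} {R : NNReal}
    (hA : ∀ a ∈ A, ‖a‖₊ ≤ R) : hausdorffEDist (c • A) (d • A) ≤ R * edist c d := by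
  have edist_smul_smul_le (c d : ℝ) (a : F) (ha : a ∈ A) :
      edist (c • a) (d • a) ≤ R * edist c d := by
    rw [edist_nndist, edist_nndist, nndist_eq_nnnorm, ← sub_smul, nnnorm_smul, nndist_eq_nnnorm,
      mul_comm]
    exact_mod_cast mul_le_mul_left (hA a ha) _
  refine hausdorffEDist_le_of_mem_edist ?_ ?_
  · rintro _ ⟨a, ha, rfl⟩
    exact ⟨d • a, Set.smul_mem_smul_set ha, edist_smul_smul_le c d a ha⟩
  · rintro _ ⟨a, ha, rfl⟩
    exact ⟨c • a, Set.smul_mem_smul_set ha, edist_comm c d ▸ edist_smul_smul_le d c a ha⟩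

theorem hausdorffEDist_sum_smul_le [Fintype ι] {w : ι → ℝ} (hw : w ∈ stdSimplex ℝ ι)
    {A B : ι → Set F} {r : ENNReal} (h : ∀ i, hausdorffEDist (A i) (B i) ≤ r) :
    hausdorffEDist (∑ i, w i • A i) (∑ i, w i • B i) ≤ r := by
  rcases eq_or_ne r ⊤ with rfl | hr
  · exact le_top
  · calc hausdorffEDist (∑ i, w i • A i) (∑ i, w i • B i)
        ≤ ∑ i, hausdorffEDist (w i • A i) (w i • B i) := hausdorffEDist_sum_le _ _ _
      _ ≤ ∑ i, ENNReal.ofReal (w i) * r := by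
          refine Finset.sum_le_sum fun i _ => ?_
          rw [← Real.enorm_of_nonneg (hw.1 i)]
          exact (hausdorffEDist_smul_le _ (ne_top_of_le_ne_top hr (h i))).trans
            (mul_le_mul_right (h i) _)
      _ = r := by
          rw [← Finset.sum_mul, ← ENNReal.ofReal_sum_of_nonneg fun i _ => hw.1 i, hw.2,
            ENNReal.ofReal_one, one_mul]

end MinkowskiSum

section ConvexFamily

variable {F : Type*} [AddCommGroup F] [Module ℝ F] {ι κ : Type*}

theorem sum_smul_set {C : Set F} (hC : Convex ℝ C) (hne : C.Nonempty) {w : ι → ℝ}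
    (s : Finset ι) (hw : ∀ i ∈ s, 0 ≤ w i) : ∑ i ∈ s, w i • C = (∑ i ∈ s, w i) • C := by
  classical
  induction s using Finset.induction_on with
  | empty => simp only [Finset.sum_empty, Set.zero_smul_set hne]
  | insert i s hi ih =>
    have hws : ∀ j ∈ s, 0 ≤ w j := fun j hj => hw j (Finset.mem_insert_of_mem hj)
    rw [Finset.sum_insert hi, Finset.sum_insert hi, ih hws,
      hC.add_smul (hw i (Finset.mem_insert_self i s)) (Finset.sum_nonneg hws)]

theorem sum_smul_comp [Fintype ι] [Fintype κ] [DecidableEq κ] (f : ι → κ) {w : ι → ℝ}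
    (hw : ∀ i, 0 ≤ w i) {N : κ → Set F} (hN : ∀ k, Convex ℝ (N k)) (hne : ∀ k, (N k).Nonempty) :
    ∑ i, w i • N (f i) = ∑ k, (∑ i with f i = k, w i) • N k := by
  rw [← Finset.sum_fiberwise Finset.univ f]
  refine Finset.sum_congr rfl fun k _ => ?_
  rw [← sum_smul_set (hN k) (hne k) _ fun i _ => hw i]
  refine Finset.sum_congr rfl fun i hi => ?_
  rw [(Finset.mem_filter.1 hi).2]

end ConvexFamily

section MinkowskiComb

open TopologicalSpace

variable {F : Type*} [NormedAddCommGroup F] [NormedSpace ℝ F] {ι κ : Type*} [Fintype ι]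

/-- The closed Minkowski combination `closure (∑ i, w i • A i)` of closed sets, as an element of
the extended metric space `Closeds F`, whose extended distance is the Hausdorff distance. -/
def minkowskiComb (w : ι → ℝ) (A : ι → Closeds F) : Closeds F :=
  Closeds.closure (∑ i, w i • (A i : Set F))

theorem coe_minkowskiComb (w : ι → ℝ) (A : ι → Closeds F) :
    (minkowskiComb w A : Set F) = closure (∑ i, w i • (A i : Set F)) :=
  rfl

theorem minkowskiComb_comp_equiv [Fintype κ] (e : κ ≃ ι) (w : ι → ℝ) (A : ι → Closeds F) :
    minkowskiComb (w ∘ e) (A ∘ e) = minkowskiComb w A :=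
  congrArg Closeds.closure (e.sum_comp fun i => w i • (A i : Set F))

theorem minkowskiComb_minkowskiComb {κ : ι → Type*} [∀ i, Fintype (κ i)] (v : ι → ℝ)
    (w : ∀ i, κ i → ℝ) (A : ∀ i, κ i → Closeds F) :
    minkowskiComb v (fun i => minkowskiComb (w i) (A i)) =
      minkowskiComb (fun p : Σ i, κ i => v p.1 * w p.1 p.2) (fun p => A p.1 p.2) := by
  refine Closeds.ext ?_
  simp only [coe_minkowskiComb, ← closure_smul₀, closure_sum_closure, Fintype.sum_sigma,
    Finset.smul_sum, mul_smul]

theorem minkowskiComb_comp [Fintype κ] [DecidableEq κ] (f : ι → κ) {w : ι → ℝ} (hw : ∀ i, 0 ≤ w i)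
    {N : κ → Closeds F} (hN : ∀ k, Convex ℝ (N k : Set F)) (hne : ∀ k, (N k : Set F).Nonempty) :
    minkowskiComb w (N ∘ f) = minkowskiComb (fun k => ∑ i with f i = k, w i) N :=
  congrArg Closeds.closure (sum_smul_comp f hw hN hne)

theorem lipschitzWith_minkowskiComb {w : ι → ℝ} (hw : w ∈ stdSimplex ℝ ι) :
    LipschitzWith 1 (minkowskiComb w : (ι → Closeds F) → Closeds F) := by
  intro A B
  rw [ENNReal.coe_one, one_mul, Closeds.edist_eq, coe_minkowskiComb, coe_minkowskiComb,
    hausdorffEDist_closure]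
  exact hausdorffEDist_sum_smul_le hw fun i => edist_le_pi_edist A B i

theorem lipschitzWith_minkowskiComb_weight {A : ι → Closeds F} {R : ι → NNReal}
    (hA : ∀ i, ∀ a ∈ A i, ‖a‖₊ ≤ R i) :
    LipschitzWith (∑ i, R i) fun w : ι → ℝ => minkowskiComb w A := by
  intro v w
  rw [Closeds.edist_eq, coe_minkowskiComb, coe_minkowskiComb, hausdorffEDist_closure]
  calc hausdorffEDist (∑ i, v i • (A i : Set F)) (∑ i, w i • (A i : Set F))
      ≤ ∑ i, hausdorffEDist (v i • (A i : Set F)) (w i • (A i : Set F)) :=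
        hausdorffEDist_sum_le _ _ _
    _ ≤ ∑ i, R i * edist v w := Finset.sum_le_sum fun i _ =>
        (hausdorffEDist_smul_smul_le _ _ (hA i)).trans
          (mul_le_mul_right (edist_le_pi_edist v w i) _)
    _ = ↑(∑ i, R i) * edist v w := by rw [← Finset.sum_mul, ENNReal.ofNNReal_finsetSum]

theorem continuous_minkowskiComb_weight {A : ι → Closeds F}
    (hA : ∀ i, Bornology.IsBounded (A i : Set F)) :
    Continuous fun w : ι → ℝ => minkowskiComb w A := by
  have exists_nnnorm_le (i : ι) : ∃ R : NNReal, ∀ a ∈ A i, ‖a‖₊ ≤ R := by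
    obtain ⟨R, hR, hAR⟩ := (hA i).exists_pos_norm_le
    exact ⟨⟨R, hR.le⟩, hAR⟩
  choose R hR using exists_nnnorm_le
  exact (lipschitzWith_minkowskiComb_weight hR).continuous

theorem pair_mem_stdSimplex {a b : ℝ} (ha : 0 ≤ a) (hb : 0 ≤ b) (hab : a + b = 1) :
    ![a, b] ∈ stdSimplex ℝ (Fin 2) :=
  ⟨Fin.forall_fin_two.2 ⟨ha, hb⟩, (Fin.sum_univ_two _).trans hab⟩

theorem convex_iff_minkowskiComb_sup_eq {C : Closeds F} :
    Convex ℝ (C : Set F) ↔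
      ∀ w ∈ stdSimplex ℝ (Fin 2), minkowskiComb w (fun _ => C) ⊔ C = C := by
  simp only [sup_eq_right, ← SetLike.coe_subset_coe, coe_minkowskiComb,
    C.isClosed.closure_subset_iff, Fin.sum_univ_two, convex_iff_pointwise_add_subset]
  refine ⟨fun h w hw => h (hw.1 0) (hw.1 1) ((Fin.sum_univ_two w).symm.trans hw.2), ?_⟩
  exact fun h a b ha hb hab => h ![a, b] (pair_mem_stdSimplex ha hb hab)

theorem isClosed_setOfPred_convex : IsClosed {C : Closeds F | Convex ℝ (C : Set F)} := by
  simp only [convex_iff_minkowskiComb_sup_eq, Set.ofPred_forall]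
  refine isClosed_biInter fun w hw => isClosed_eq ?_ continuous_id
  have hcomb : Continuous fun C : Closeds F => minkowskiComb w fun _ => C :=
    (lipschitzWith_minkowskiComb hw).continuous.comp (continuous_pi fun _ => continuous_id)
  exact Closeds.lipschitz_sup.continuous.comp (hcomb.prodMk continuous_id)

end MinkowskiComb

section MinkowskiHull

open TopologicalSpace

variable {F : Type*} [NormedAddCommGroup F] [NormedSpace ℝ F] {ι : Type*} [Fintype ι]
  {K : Set (Closeds F)}

/-- The closed Minkowski combinations of members of `K` with weights in a standard simplex: the
family `co K`, inside `Closeds F`. -/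
def minkowskiHull (K : Set (Closeds F)) : Set (Closeds F) :=
  {C | ∃ (n : ℕ) (A : Fin n → Closeds F) (w : Fin n → ℝ),
    (∀ i, A i ∈ K) ∧ w ∈ stdSimplex ℝ (Fin n) ∧ C = minkowskiComb w A}

theorem minkowskiComb_mem_minkowskiHull {w : ι → ℝ} (hw : w ∈ stdSimplex ℝ ι)
    {A : ι → Closeds F} (hA : ∀ i, A i ∈ K) : minkowskiComb w A ∈ minkowskiHull K := by
  let e := (Fintype.equivFin ι).symm
  refine ⟨Fintype.card ι, A ∘ e, w ∘ e, fun i => hA (e i), ⟨fun i => hw.1 (e i), ?_⟩,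
    (minkowskiComb_comp_equiv e w A).symm⟩
  exact (e.sum_comp w).trans hw.2

theorem minkowskiComb_mem_minkowskiHull_of_mem_minkowskiHull {v : ι → ℝ}
    (hv : v ∈ stdSimplex ℝ ι) {A : ι → Closeds F} (hA : ∀ i, A i ∈ minkowskiHull K) :
    minkowskiComb v A ∈ minkowskiHull K := by
  choose n B w hB hw hAB using hA
  have hvw : (fun p : Σ i, Fin (n i) => v p.1 * w p.1 p.2) ∈ stdSimplex ℝ (Σ i, Fin (n i)) := by
    refine ⟨fun p => mul_nonneg (hv.1 p.1) ((hw p.1).1 p.2), ?_⟩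
    simp only [Fintype.sum_sigma, ← Finset.mul_sum, (hw _).2, mul_one, hv.2]
  rw [funext hAB, minkowskiComb_minkowskiComb]
  exact minkowskiComb_mem_minkowskiHull hvw fun p => hB p.1 p.2

theorem minkowskiComb_mem_closure_minkowskiHull {w : ι → ℝ} (hw : w ∈ stdSimplex ℝ ι)
    {A : ι → Closeds F} (hA : ∀ i, A i ∈ closure (minkowskiHull K)) :
    minkowskiComb w A ∈ closure (minkowskiHull K) := by
  have hA' : A ∈ closure (Set.univ.pi fun _ => minkowskiHull K) := by
    rw [closure_pi_set]
    exact fun i _ => hA i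
  exact map_mem_closure (lipschitzWith_minkowskiComb hw).continuous hA' fun B hB =>
    minkowskiComb_mem_minkowskiHull_of_mem_minkowskiHull hw fun i => hB i (Set.mem_univ i)

theorem exists_edist_minkowskiComb_le {t : Set (Closeds F)} [Fintype t]
    (hconv : ∀ C ∈ t, Convex ℝ (C : Set F)) (hne : ∀ C ∈ t, (C : Set F).Nonempty)
    {ε : ENNReal} (hKt : ∀ C ∈ K, ∃ D ∈ t, edist C D ≤ ε) {C : Closeds F}
    (hC : C ∈ minkowskiHull K) :
    ∃ w ∈ stdSimplex ℝ t, edist C (minkowskiComb w ((↑) : t → Closeds F)) ≤ ε := by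
  classical
  obtain ⟨n, A, w, hA, hw, rfl⟩ := hC
  have exists_near (i : Fin n) : ∃ D : t, edist (A i) D ≤ ε := by
    obtain ⟨D, hD, hAD⟩ := hKt (A i) (hA i)
    exact ⟨⟨D, hD⟩, hAD⟩
  choose f hf using exists_near
  refine ⟨fun D => ∑ i with f i = D, w i, ⟨fun D => Finset.sum_nonneg fun i _ => hw.1 i,
    (Finset.sum_fiberwise _ _ _).trans hw.2⟩, ?_⟩
  rw [← minkowskiComb_comp f hw.1 (fun D => hconv D D.2) fun D => hne D D.2]
  calc edist (minkowskiComb w A) (minkowskiComb w ((↑) ∘ f))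
      ≤ edist A ((↑) ∘ f) := by simpa using lipschitzWith_minkowskiComb hw A ((↑) ∘ f)
    _ ≤ ε := edist_pi_le_iff.2 hf

theorem totallyBounded_minkowskiHull (hK : TotallyBounded K)
    (hconv : ∀ C ∈ K, Convex ℝ (C : Set F)) (hne : ∀ C ∈ K, (C : Set F).Nonempty)
    (hbdd : ∀ C ∈ K, Bornology.IsBounded (C : Set F)) : TotallyBounded (minkowskiHull K) := by
  refine totallyBounded_of_forall_exists_edist_lt fun ε hε => ?_
  obtain ⟨δ, hδ, hδε⟩ := exists_between hε
  obtain ⟨t, htK, ht, hKt⟩ := EMetric.totallyBounded_iff'.1 hK δ hδ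
  have : Fintype t := ht.fintype
  refine ⟨(fun w => minkowskiComb w ((↑) : t → Closeds F)) '' stdSimplex ℝ t, ?_, ?_⟩
  · exact ((isCompact_stdSimplex ℝ t).image
      (continuous_minkowskiComb_weight fun D => hbdd D (htK D.2))).totallyBounded
  · intro C hC
    have exists_near : ∀ A ∈ K, ∃ D ∈ t, edist A D ≤ δ := fun A hA => by
      obtain ⟨D, hD, hAD⟩ := Set.mem_iUnion₂.1 (hKt hA)
      exact ⟨D, hD, hAD.le⟩
    obtain ⟨w, hw, hCw⟩ := exists_edist_minkowskiComb_le (fun D hD => hconv D (htK hD))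
      (fun D hD => hne D (htK hD)) exists_near hC
    exact ⟨_, Set.mem_image_of_mem _ hw, hCw.trans_lt hδε⟩

end MinkowskiHull

section PompeiuHausdorff

open TopologicalSpace

variable {F : Type*} [NormedAddCommGroup F] {A B : Set F}

theorem infDist_le_excess (h : hausdorffEDist A B ≠ ⊤) {a : F} (ha : a ∈ A) :
    infDist a B ≤ excess A B := by
  refine le_csSup ⟨hausdorffDist A B, ?_⟩ (Set.mem_image_of_mem _ ha)
  rintro _ ⟨x, hx, rfl⟩
  exact infDist_le_hausdorffDist_of_mem hx h

theorem excess_le_hausdorffDist (h : hausdorffEDist A B ≠ ⊤) :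
    excess A B ≤ hausdorffDist A B := by
  refine Real.sSup_le ?_ hausdorffDist_nonneg
  rintro _ ⟨x, hx, rfl⟩
  exact infDist_le_hausdorffDist_of_mem hx h

theorem excess_nonneg (A B : Set F) : 0 ≤ excess A B := by
  refine Real.sSup_nonneg ?_
  rintro _ ⟨x, -, rfl⟩
  exact infDist_nonneg

theorem hdist_eq_hausdorffDist (h : hausdorffEDist A B ≠ ⊤) : hdist A B = hausdorffDist A B := by
  have h' : hausdorffEDist B A ≠ ⊤ := by rwa [hausdorffEDist_comm]
  refine le_antisymm (max_le (excess_le_hausdorffDist h) ?_) ?_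
  · exact hausdorffDist_comm (s := A) ▸ excess_le_hausdorffDist h'
  · exact hausdorffDist_le_of_infDist (le_max_of_le_left (excess_nonneg A B))
      (fun a ha => le_max_of_le_left (infDist_le_excess h ha))
      (fun b hb => le_max_of_le_right (infDist_le_excess h' hb))

variable [NormedSpace ℝ F] {𝒮 𝒵 : Set (Set F)}

theorem IsCBC.hausdorffEDist_ne_top (hA : IsCBC A) (hB : IsCBC B) : hausdorffEDist A B ≠ ⊤ :=
  hausdorffEDist_ne_top_of_nonempty_of_bounded hA.1 hB.1 hA.2.2.1 hB.2.2.1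

theorem IsCBC.closure_sum_smul {ι : Type*} [Fintype ι] (w : ι → ℝ) {A : ι → Set F}
    (hA : ∀ i, IsCBC (A i)) : IsCBC (closure (∑ i, w i • A i)) := by
  refine ⟨Set.Nonempty.closure ?_, isClosed_closure, Bornology.IsBounded.closure ?_,
    Convex.closure (convex_sum _ fun i _ => (hA i).2.2.2.smul _)⟩
  · exact Finset.sum_induction _ Set.Nonempty (fun _ _ => Set.Nonempty.add) Set.zero_nonempty
      fun i _ => (hA i).1.smul_set
  · exact Finset.sum_induction _ Bornology.IsBounded (fun _ _ => Bornology.IsBounded.add)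
      Bornology.isBounded_singleton fun i _ => (hA i).2.2.1.smul₀ _

theorem IsCBC.of_mem_coFam (h𝒵 : ∀ A ∈ 𝒵, IsCBC A) : ∀ Y ∈ coFam 𝒵, IsCBC Y := by
  rintro _ ⟨n, X, w, hX, -, -, rfl⟩
  exact IsCBC.closure_sum_smul w fun i => h𝒵 _ (hX i)

theorem isClosed_setOfPred_isCBC : IsClosed {C : Closeds F | IsCBC (C : Set F)} := by
  convert isClosed_setOfPred_nonempty_isBounded.inter (isClosed_setOfPred_convex (F := F)) using 1
  ext C
  simp only [IsCBC, C.isClosed, true_and, and_assoc, Set.mem_ofPred_eq, Set.mem_inter_iff]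

theorem tendsto_hdist_iff_tendsto {α : Type*} {l : Filter α} {Z : α → Closeds F} {W : Closeds F}
    (hZ : ∀ n, IsCBC (Z n : Set F)) (hW : IsCBC (W : Set F)) :
    Tendsto (fun n => hdist (Z n : Set F) W) l (𝓝 0) ↔ Tendsto Z l (𝓝 W) := by
  have hfin (n : α) : hausdorffEDist (Z n : Set F) W ≠ ⊤ := (hZ n).hausdorffEDist_ne_top hW
  simp only [fun n => hdist_eq_hausdorffDist (hfin n)]
  rw [tendsto_iff_edist_tendsto_0 (f := Z)]
  exact ENNReal.tendsto_toReal_iff hfin ENNReal.zero_ne_top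

theorem hCompact_iff_isCompact (h𝒮 : ∀ A ∈ 𝒮, IsCBC A) :
    HCompact 𝒮 ↔ IsCompact ((↑) ⁻¹' 𝒮 : Set (Closeds F)) := by
  rw [isCompact_iff_isSeqCompact]
  constructor
  · intro h Z hZ
    obtain ⟨W, hW, φ, hφ, hlim⟩ := h (fun n => Z n) hZ
    exact ⟨⟨W, (h𝒮 W hW).2.1⟩, hW, φ, hφ,
      (tendsto_hdist_iff_tendsto (fun n => h𝒮 _ (hZ (φ n))) (h𝒮 W hW)).1 hlim⟩
  · intro h Z hZ
    lift Z to ℕ → Closeds F using fun n => (h𝒮 _ (hZ n)).2.1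
    obtain ⟨W, hW, φ, hφ, hlim⟩ := h hZ
    exact ⟨W, hW, φ, hφ, (tendsto_hdist_iff_tendsto (fun n => h𝒮 _ (hZ (φ n))) (h𝒮 W hW)).2 hlim⟩

theorem preimage_hClosureIn (h𝒮 : ∀ A ∈ 𝒮, IsCBC A) :
    ((↑) ⁻¹' HClosureIn 𝒮 : Set (Closeds F)) = closure ((↑) ⁻¹' 𝒮) := by
  ext C
  rw [mem_closure_iff_seq_limit]
  constructor
  · rintro ⟨hC, Z, hZ, hlim⟩
    lift Z to ℕ → Closeds F using fun n => (h𝒮 _ (hZ n)).2.1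
    exact ⟨Z, hZ, (tendsto_hdist_iff_tendsto (fun n => h𝒮 _ (hZ n)) hC).1 hlim⟩
  · rintro ⟨Z, hZ, hlim⟩
    have hZ' (n : ℕ) : IsCBC (Z n : Set F) := h𝒮 _ (hZ n)
    have hC : IsCBC (C : Set F) :=
      isClosed_setOfPred_isCBC.mem_of_tendsto hlim (Eventually.of_forall hZ')
    exact ⟨hC, fun n => Z n, hZ, (tendsto_hdist_iff_tendsto hZ' hC).2 hlim⟩

theorem preimage_coFam (h𝒵 : ∀ A ∈ 𝒵, IsClosed A) :
    ((↑) ⁻¹' coFam 𝒵 : Set (Closeds F)) = minkowskiHull ((↑) ⁻¹' 𝒵) := by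
  ext C
  constructor
  · rintro ⟨n, X, w, hX, hw, hsum, hC⟩
    lift X to Fin n → Closeds F using fun i => h𝒵 _ (hX i)
    exact ⟨n, X, w, hX, ⟨fun i => (hw i).1, hsum⟩, Closeds.ext hC⟩
  · rintro ⟨n, A, w, hA, hw, rfl⟩
    exact ⟨n, fun i => A i, w, hA, mem_Icc_of_mem_stdSimplex hw, hw.2, rfl⟩

theorem preimage_hClosureIn_coFam (h𝒵 : ∀ A ∈ 𝒵, IsCBC A) :
    ((↑) ⁻¹' HClosureIn (coFam 𝒵) : Set (Closeds F)) =
      closure (minkowskiHull ((↑) ⁻¹' 𝒵)) := by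
  rw [preimage_hClosureIn (IsCBC.of_mem_coFam h𝒵), preimage_coFam fun A hA => (h𝒵 A hA).2.1]

theorem hCompact_hClosureIn_coFam [CompleteSpace F] (h𝒵 : ∀ A ∈ 𝒵, IsCBC A)
    (htb : TotallyBounded ((↑) ⁻¹' 𝒵 : Set (Closeds F))) : HCompact (HClosureIn (coFam 𝒵)) := by
  rw [hCompact_iff_isCompact fun Y hY => hY.1, preimage_hClosureIn_coFam h𝒵]
  have htb' : TotallyBounded (minkowskiHull ((↑) ⁻¹' 𝒵 : Set (Closeds F))) :=
    totallyBounded_minkowskiHull htb (fun C hC => (h𝒵 C hC).2.2.2) (fun C hC => (h𝒵 C hC).1)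
      fun C hC => (h𝒵 C hC).2.2.1
  exact htb'.closure.isCompact_of_isClosed isClosed_closure

theorem closure_add_smul_mem_hClosureIn_coFam (h𝒵 : ∀ A ∈ 𝒵, IsCBC A) {Y₁ Y₂ : Set F}
    (hY₁ : Y₁ ∈ HClosureIn (coFam 𝒵)) (hY₂ : Y₂ ∈ HClosureIn (coFam 𝒵)) {a b : ℝ}
    (ha : 0 ≤ a) (hb : 0 ≤ b) (hab : a + b = 1) :
    closure (a • Y₁ + b • Y₂) ∈ HClosureIn (coFam 𝒵) := by
  lift Y₁ to Closeds F using hY₁.1.2.1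
  lift Y₂ to Closeds F using hY₂.1.2.1
  have hmem : ∀ i, ![Y₁, Y₂] i ∈ ((↑) ⁻¹' HClosureIn (coFam 𝒵) : Set (Closeds F)) :=
    Fin.forall_fin_two.2 ⟨hY₁, hY₂⟩
  rw [preimage_hClosureIn_coFam h𝒵] at hmem
  have hcomb := minkowskiComb_mem_closure_minkowskiHull (pair_mem_stdSimplex ha hb hab) hmem
  rw [← preimage_hClosureIn_coFam h𝒵] at hcomb
  simpa [coe_minkowskiComb, Fin.sum_univ_two] using hcomb

end PompeiuHausdorff

theorem mazur_for_sets_general (𝒵 : Set (Set E)) (h𝒵 : ∀ A ∈ 𝒵, IsCBC A)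
    (h𝒵tb : TotallyBounded ((↑) ⁻¹' 𝒵 : Set (TopologicalSpace.Closeds E))) :
    HCompact (HClosureIn (coFam 𝒵)) ∧
      ∀ Y₁ ∈ HClosureIn (coFam 𝒵), ∀ Y₂ ∈ HClosureIn (coFam 𝒵),
        ∀ lam : ℝ, 0 ≤ lam → lam ≤ 1 →
          closure ((1 - lam) • Y₁ + lam • Y₂) ∈ HClosureIn (coFam 𝒵) :=
  ⟨hCompact_hClosureIn_coFam h𝒵 h𝒵tb, fun _ hY₁ _ hY₂ _ h0 h1 =>
    closure_add_smul_mem_hClosureIn_coFam h𝒵 hY₁ hY₂ (sub_nonneg.2 h1) h0 (sub_add_cancel 1 _)⟩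

/-- Proposition 3.6 (Mazur's theorem for spaces of sets): if `𝒵 ⊆ ℭ_c(E)` is nonempty
and compact in the Pompeiu–Hausdorff metric, then the closure of `co 𝒵` in
`(ℭ_c(E), h)` is compact and convex. -/
theorem mazur_for_sets (𝒵 : Set (Set E)) (h𝒵ne : 𝒵.Nonempty)
    (h𝒵 : ∀ A ∈ 𝒵, IsCBC A) (h𝒵c : HCompact 𝒵) :
    HCompact (HClosureIn (coFam 𝒵)) ∧
      ∀ Y₁ ∈ HClosureIn (coFam 𝒵), ∀ Y₂ ∈ HClosureIn (coFam 𝒵),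
        ∀ lam : ℝ, 0 ≤ lam → lam ≤ 1 →
          closure ((1 - lam) • Y₁ + lam • Y₂) ∈ HClosureIn (coFam 𝒵) := by
  exact mazur_for_sets_general 𝒵 h𝒵 ((hCompact_iff_isCompact h𝒵).1 h𝒵c).totallyBounded
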